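/- Let p be a prime, q = 1/p, and let n ≥ 1 and μ ≥ 1 be integers. Set k = ⌊n/2⌋ and s = ⌊(μ−1)/2⌋. Then P(n, p^μ) = (Π_{2k}(q) / ((1−q)·Π_k(q²))) · ((1−q^{2k+1})·T_3(k,s) − q^μ(1−q^n)·T_1(k,s)). -/

import Mathlib

/-- Number of symmetric `n × n` matrices over `ZMod m` with nonzero determinant. -/
noncomputable def Nsym (n m : ℕ) : ℕ :=
  Nat.card {A : Matrix (Fin n) (Fin n) (ZMod m) // A.IsSymm ∧ A.det ≠ 0}

/-- Proportion of symmetric `n × n` matrices over `ZMod m` with nonzero determinant. -/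
noncomputable def Psym (n m : ℕ) : ℝ :=
  (Nsym n m : ℝ) / (m : ℝ) ^ (n * (n + 1) / 2)

/-- `Π_n(t) = ∏_{j=1}^n (1 - t^j)`. -/
noncomputable def PiProd (n : ℕ) (t : ℝ) : ℝ :=
  ∏ j ∈ Finset.range n, (1 - t ^ (j + 1))

/-- `T_β(k,s)`: equal to `1` if `k = 0`, and to
`∑_{j=0}^{s} q^{βj} · Π_{k+j−1}(q²) / (Π_j(q²) · Π_{k−1}(q²))` if `k ≥ 1`. -/
noncomputable def T (q : ℝ) (β k s : ℕ) : ℝ :=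
  if k = 0 then 1
  else ∑ j ∈ Finset.range (s + 1),
    q ^ (β * j) * PiProd (k + j - 1) (q ^ 2) / (PiProd j (q ^ 2) * PiProd (k - 1) (q ^ 2))

open Finset Matrix
open scoped BigOperators

/-- The additive group of symmetric matrices. -/
def symMat (ι R : Type*) [CommRing R] : AddSubgroup (Matrix ι ι R) where
  carrier := {A | A.IsSymm}
  zero_mem' := Matrix.isSymm_zero
  add_mem' := fun ha hb => ha.add hb
  neg_mem' := fun ha => ha.neg

noncomputable instance (ι R : Type*) [CommRing R] [Finite ι] [Finite R] :
    Fintype (symMat ι R) := Fintype.ofFinite _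

/-- The average of `g (det A)` over all symmetric matrices `A`. -/
noncomputable def symAvg {R : Type*} [CommRing R] [Finite R] (ι : Type*) [Fintype ι]
    [DecidableEq ι] (g : R → ℝ) : ℝ := 𝔼 A : symMat ι R, g A.1.det

section Averages

theorem expect_add_right {G : Type*} [AddGroup G] [Fintype G] (f : G → ℝ) (t : G) :
    𝔼 x, f (x + t) = 𝔼 x, f x :=
  Fintype.expect_equiv (Equiv.addRight t) _ _ fun _ => rfl

theorem expect_prod {α β : Type*} [Fintype α] [Fintype β] (f : α × β → ℝ) :
    𝔼 x, f x = 𝔼 a, 𝔼 b, f (a, b) := by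
  rw [← univ_product_univ, expect_product]

theorem sum_comp_addMonoidHom {G H : Type*} [AddGroup G] [Fintype G] [AddGroup H] [Fintype H]
    [DecidableEq H] (φ : G →+ H) [DecidablePred (· ∈ φ.range)] (f : H → ℝ) :
    ∑ x, f (φ x) = Nat.card φ.ker * ∑ y, if y ∈ φ.range then f y else 0 := by
  rw [← sum_fiberwise_of_maps_to (g := φ) (t := univ) (fun _ _ => mem_univ _), mul_sum]
  refine sum_congr rfl fun y _ => ?_
  rw [sum_congr rfl (g := fun _ => f y) (fun x hx => by rw [(mem_filter.1 hx).2]), sum_const,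
    nsmul_eq_mul]
  split_ifs with hy
  · congr 2
    rw [AddMonoidHom.card_fiber_eq_of_mem_range φ (y := 0) hy ⟨0, map_zero φ⟩,
      Nat.card_eq_fintype_card, Fintype.card_subtype]
    simp [AddMonoidHom.mem_ker]
  · rw [filter_eq_empty_iff.2 fun x _ hx => hy ⟨x, hx⟩]
    simp

end Averages

theorem isSymm_conj_inv {R ι κ : Type*} [CommRing R] [Fintype κ] [DecidableEq κ]
    {K : Matrix κ κ R} (hK : K.IsSymm) (X : Matrix κ ι R) :
    (Xᵀ * K⁻¹ * X).IsSymm := by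
  simp [Matrix.IsSymm, transpose_mul, transpose_nonsing_inv, hK.eq, Matrix.mul_assoc]

theorem det_fromBlocks_unique {R m n : Type*} [CommRing R] [Unique m] [Unique n]
    [Fintype m] [Fintype n] [DecidableEq m] [DecidableEq n]
    (A : Matrix m m R) (B : Matrix m n R) (C : Matrix n m R) (D : Matrix n n R) :
    (fromBlocks A B C D).det =
      A default default * D default default - B default default * C default default := by
  let e : Fin 1 ⊕ Fin 1 ≃ m ⊕ n := Equiv.sumCongr (Equiv.ofUnique _ _) (Equiv.ofUnique _ _)
  rw [← det_submatrix_equiv_self (finSumFinEquiv.symm.trans e), det_fin_two]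
  rfl

section Schur

variable {R : Type*} [CommRing R] [Finite R] {ι κ : Type*} [Fintype ι] [DecidableEq ι]
  [Fintype κ] [DecidableEq κ]

/-- Reindexing of symmetric matrices. -/
def symMatReindex {ι κ : Type*} (e : ι ≃ κ) (R : Type*) [CommRing R] :
    symMat ι R ≃ symMat κ R where
  toFun A := ⟨A.1.submatrix e.symm e.symm, A.2.submatrix _⟩
  invFun A := ⟨A.1.submatrix e e, A.2.submatrix _⟩
  left_inv A := by ext; simp
  right_inv A := by ext; simp

theorem symAvg_congr (e : ι ≃ κ) (g : R → ℝ) : symAvg ι g = symAvg κ g :=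
  Fintype.expect_equiv (symMatReindex e R) _ _ fun A => by
    simp [symMatReindex, Matrix.det_submatrix_equiv_self]

/-- Symmetric matrices bordered by one extra row are given by the corner entry, the rest of the
extra row, and the remaining symmetric block. -/
def symMatBorder (ι R : Type*) [CommRing R] :
    R × (ι → R) × symMat ι R ≃ symMat (Unit ⊕ ι) R where
  toFun x := ⟨fromBlocks (of fun _ _ => x.1) (of fun _ j => x.2.1 j) (of fun i _ => x.2.1 i)
      x.2.2.1,
    Matrix.IsSymm.fromBlocks rfl rfl x.2.2.2⟩
  invFun A := ⟨A.1 (.inl ()) (.inl ()), fun j => A.1 (.inl ()) (.inr j),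
    ⟨A.1.toBlocks₂₂, by ext i j; exact A.2.apply _ _⟩⟩
  left_inv x := rfl
  right_inv A := by
    ext i j
    rcases i with i | i <;> rcases j with j | j
    · rfl
    · rfl
    · exact A.2.apply _ _
    · rfl

/-- Averaging over bordered matrices. -/
theorem symAvg_border [Fintype R] (g : R → ℝ) :
    symAvg (Unit ⊕ ι) g = 𝔼 a : R, 𝔼 w : ι → R, 𝔼 B : symMat ι R,
      g (fromBlocks (of fun (_ _ : Unit) => a) (of fun _ j => w j) (of fun i _ => w i)
        B.1).det := by
  rw [symAvg, ← Fintype.expect_equiv (symMatBorder ι R) _ _ fun _ => rfl, expect_prod]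
  refine expect_congr rfl fun a _ => ?_
  rw [expect_prod]
  rfl

/-- Averaging over the Schur complement of an invertible block. -/
theorem expect_det_fromBlocks {g : R → ℝ} (hg : ∀ u x, IsUnit u → g (u * x) = g x)
    (K : Matrix κ κ R) (hK : IsUnit K.det) (X : Matrix κ ι R) (Y : Matrix ι κ R)
    (hXY : (Y * K⁻¹ * X).IsSymm) :
    𝔼 C : symMat ι R, g (fromBlocks K X Y C.1).det = symAvg ι g := by
  have := K.invertibleOfIsUnitDet hK
  rw [symAvg, ← expect_add_right (fun A : symMat ι R => g A.1.det) (-⟨Y * K⁻¹ * X, hXY⟩)]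
  refine expect_congr rfl fun C _ => ?_
  rw [det_fromBlocks₁₁, hg _ _ hK, invOf_eq_nonsing_inv, sub_eq_add_neg]
  rfl

/-- Averaging over bordered matrices whose extra row has a unit entry off the diagonal and a
non-unit diagonal entry. -/
theorem expect_det_border_of_isUnit {g : R → ℝ} (hg : ∀ u x, IsUnit u → g (u * x) = g x)
    [IsLocalRing R] {a : R} (ha : ¬ IsUnit a) {w : ι → R} {j : ι} (hj : IsUnit (w j)) :
    𝔼 B : symMat ι R,
      g (fromBlocks (of fun (_ _ : Unit) => a) (of fun _ j => w j) (of fun i _ => w i) B.1).det =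
      symAvg {i // ¬ i = j} g := by
  let emb : symMat {i // ¬ i = j} R → symMat ι R := fun C =>
    ⟨of fun i k => if h : ¬ i = j ∧ ¬ k = j then C.1 ⟨i, h.1⟩ ⟨k, h.2⟩ else 0, by
      ext i k
      by_cases hi : i = j <;> by_cases hk : k = j <;> simp [hi, hk]
      exact C.2.apply _ _⟩
  have emb_of_ne (C i k) (hi : ¬ i = j) (hk : ¬ k = j) :
      (emb C).1 i k = C.1 ⟨i, hi⟩ ⟨k, hk⟩ := dif_pos ⟨hi, hk⟩
  have emb_left (C i k) (hi : i = j) : (emb C).1 i k = 0 := dif_neg fun h => h.1 hi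
  have emb_right (C i k) (hk : k = j) : (emb C).1 i k = 0 := dif_neg fun h => h.2 hk
  have key : ∀ B : symMat ι R, 𝔼 C : symMat {i // ¬ i = j} R,
      g (fromBlocks (of fun (_ _ : Unit) => a) (of fun _ j => w j) (of fun i _ => w i)
        (B + emb C).1).det = symAvg {i // ¬ i = j} g := by
    intro B
    let K : Matrix (Unit ⊕ {i // i = j}) (Unit ⊕ {i // i = j}) R :=
      fromBlocks (of fun _ _ => a) (of fun _ i => w i) (of fun i _ => w i)
        (of fun i k => B.1 i k)
    let X : Matrix (Unit ⊕ {i // i = j}) {i // ¬ i = j} R :=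
      of fun i k => Sum.elim (fun _ => w k) (fun i => B.1 i k) i
    let D : symMat {i // ¬ i = j} R := ⟨of fun i k => B.1 i k, by ext i k; exact B.2.apply _ _⟩
    have hKs : K.IsSymm := Matrix.IsSymm.fromBlocks rfl rfl (by ext i k; exact B.2.apply _ _)
    have hK : IsUnit K.det := by
      have hdet : K.det = a * B.1 j j - w j * w j := det_fromBlocks_unique _ _ _ _
      rw [hdet]
      have h1 : a * B.1 j j ∈ nonunits R := fun h => ha (isUnit_of_mul_isUnit_left h)
      by_contra h2
      have h3 := IsLocalRing.nonunits_add (a := a * B.1 j j)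
        (b := -(a * B.1 j j - w j * w j)) h1 (fun h => h2 (by simpa using h.neg))
      exact h3 (by simpa using hj.mul hj)
    rw [← expect_det_fromBlocks hg K hK X Xᵀ (isSymm_conj_inv hKs X),
      ← expect_add_right (fun C : symMat {i // ¬ i = j} R => g (fromBlocks K X Xᵀ C.1).det) D]
    refine expect_congr rfl fun C _ => ?_
    let E : (Unit ⊕ {i // i = j}) ⊕ {i // ¬ i = j} ≃ Unit ⊕ ι :=
      (Equiv.sumAssoc _ _ _).trans (Equiv.sumCongr (Equiv.refl _) (Equiv.sumCompl _))
    rw [← det_submatrix_equiv_self E]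
    congr 2
    ext x y
    rcases x with (x | x) | x <;> rcases y with (y | y) | y
    · rfl
    · rfl
    · rfl
    · rfl
    · change B.1 x y + (emb C).1 x y = B.1 x y
      rw [emb_left _ _ _ x.2, add_zero]
    · change B.1 x y + (emb C).1 x y = B.1 x y
      rw [emb_left _ _ _ x.2, add_zero]
    · rfl
    · change B.1 x y + (emb C).1 x y = B.1 y x
      rw [emb_right _ _ _ y.2, add_zero, B.2.apply]
    · change B.1 x y + (emb C).1 x y = C.1 x y + B.1 x y
      rw [emb_of_ne _ _ _ x.2 y.2, add_comm]
  rw [← Fintype.expect_const (ι := symMat ι R) (symAvg {i // ¬ i = j} g),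
    ← expect_congr rfl fun B _ => key B, expect_comm,
    ← Fintype.expect_const (ι := symMat {i // ¬ i = j} R) (𝔼 B : symMat ι R, _)]
  exact expect_congr rfl fun C _ => (expect_add_right (fun B : symMat ι R =>
    g (fromBlocks (of fun (_ _ : Unit) => a) (of fun _ j => w j) (of fun i _ => w i) B.1).det)
    (emb C)).symm

end Schur

theorem expect_eq_add_expect_comp {G : Type*} [AddGroup G] [Fintype G] (φ : G →+ G)
    (P : G → Prop) [DecidablePred P] (hP : ∀ x, ¬ P x ↔ x ∈ φ.range) (f : G → ℝ) :
    𝔼 x, f x = 𝔼 x, (if P x then f x else 0) + (Nat.card φ.ker : ℝ)⁻¹ * 𝔼 x, f (φ x) := by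
  classical
  have hker : (Nat.card φ.ker : ℝ) ≠ 0 := by exact_mod_cast Nat.card_pos.ne'
  simp_rw [Fintype.expect_eq_sum_div_card, sum_comp_addMonoidHom φ f, mul_div_assoc]
  rw [inv_mul_cancel_left₀ hker, ← add_div, ← sum_add_distrib]
  congr 1
  refine sum_congr rfl fun x _ => ?_
  by_cases h : P x
  · rw [if_pos h, if_neg (fun h' => (hP x).2 h' h), add_zero]
  · rw [if_neg h, if_pos ((hP x).1 h), zero_add]

open scoped Classical in
/-- The indicator function of the elements of `ℤ/p^N` not divisible by `p^μ`. -/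
noncomputable def notDvd (p N μ : ℕ) (x : ZMod (p ^ N)) : ℝ :=
  if (p : ZMod (p ^ N)) ^ μ ∣ x then 0 else 1

theorem notDvd_zero {p N : ℕ} (x : ZMod (p ^ N)) : notDvd p N 0 x = 0 := by simp [notDvd]

section PrimePower

variable {p N : ℕ} [Fact p.Prime]

theorem not_isUnit_iff_dvd (hN : 0 < N) (a : ZMod (p ^ N)) :
    ¬ IsUnit a ↔ (p : ZMod (p ^ N)) ∣ a := by
  have hp : p.Prime := Fact.out
  obtain ⟨n, rfl⟩ := ZMod.natCast_zmod_surjective a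
  rw [ZMod.isUnit_iff_coprime, Nat.coprime_pow_right_iff hN, Nat.coprime_comm,
    hp.coprime_iff_not_dvd, not_not]
  constructor
  · rintro ⟨m, rfl⟩
    exact ⟨m, by push_cast; rfl⟩
  · rintro ⟨b, hb⟩
    obtain ⟨m, rfl⟩ := ZMod.natCast_zmod_surjective b
    rw [← Nat.cast_mul, ZMod.natCast_eq_natCast_iff] at hb
    exact (hb.dvd_iff (dvd_pow_self p hN.ne')).2 ⟨m, rfl⟩

theorem isLocalRing_zmod_prime_pow (hN : 0 < N) : IsLocalRing (ZMod (p ^ N)) := by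
  have hp : p.Prime := Fact.out
  have : Fact (1 < p ^ N) := ⟨Nat.one_lt_pow hN.ne' hp.one_lt⟩
  refine IsLocalRing.of_nonunits_add fun a b ha hb => ?_
  rw [mem_nonunits_iff, not_isUnit_iff_dvd hN] at *
  exact dvd_add ha hb

theorem pow_dvd_mul_iff {μ : ℕ} (hμ : μ < N) (x : ZMod (p ^ N)) :
    (p : ZMod (p ^ N)) ^ (μ + 1) ∣ p * x ↔ (p : ZMod (p ^ N)) ^ μ ∣ x := by
  have hp : p.Prime := Fact.out
  have key : ∀ (k m : ℕ), k ≤ N → ((p : ZMod (p ^ N)) ^ k ∣ m ↔ p ^ k ∣ m) := by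
    intro k m hk
    constructor
    · rintro ⟨b, hb⟩
      obtain ⟨l, rfl⟩ := ZMod.natCast_zmod_surjective b
      rw [← Nat.cast_pow, ← Nat.cast_mul, ZMod.natCast_eq_natCast_iff] at hb
      exact (hb.dvd_iff (pow_dvd_pow p hk)).2 ⟨l, rfl⟩
    · rintro ⟨l, rfl⟩
      exact ⟨l, by push_cast; rfl⟩
  obtain ⟨m, rfl⟩ := ZMod.natCast_zmod_surjective x
  rw [← Nat.cast_mul, key _ _ hμ, key _ _ hμ.le, pow_succ', Nat.mul_dvd_mul_iff_left hp.pos]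

theorem card_mul_eq_zero (hN : 0 < N) :
    Nat.card (AddMonoidHom.mulLeft (p : ZMod (p ^ N))).ker = p := by
  have hp : p.Prime := Fact.out
  obtain ⟨M, rfl⟩ := Nat.exists_eq_succ_of_ne_zero hN.ne'
  have hM : 0 < p ^ M := pow_pos hp.pos M
  refine (Nat.card_eq_of_bijective (fun i : Fin p =>
    (⟨((p ^ M * i : ℕ) : ZMod (p ^ (M + 1))), ?_⟩ :
      (AddMonoidHom.mulLeft (p : ZMod (p ^ (M + 1)))).ker)) ⟨?_, ?_⟩).symm.trans (Nat.card_fin p)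
  · rw [AddMonoidHom.mem_ker, AddMonoidHom.coe_mulLeft, ← Nat.cast_mul,
      ZMod.natCast_eq_zero_iff]
    exact ⟨i, by ring⟩
  · intro i j hij
    have h := Subtype.ext_iff.1 hij
    simp only at h
    rw [ZMod.natCast_eq_natCast_iff, pow_succ] at h
    have h2 := Nat.ModEq.mul_left_cancel' hM.ne' h
    exact Fin.ext (Nat.ModEq.eq_of_lt_of_lt h2 i.2 j.2)
  · rintro ⟨x, hx⟩
    obtain ⟨m, rfl⟩ := ZMod.natCast_zmod_surjective x
    rw [AddMonoidHom.mem_ker, AddMonoidHom.coe_mulLeft, ← Nat.cast_mul,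
      ZMod.natCast_eq_zero_iff, pow_succ', Nat.mul_dvd_mul_iff_left hp.pos] at hx
    obtain ⟨l, rfl⟩ := hx
    refine ⟨⟨l % p, Nat.mod_lt _ hp.pos⟩, Subtype.ext ?_⟩
    simp only
    rw [ZMod.natCast_eq_natCast_iff, pow_succ]
    exact (Nat.mod_modEq l p).mul_left' _

open scoped Classical in
/-- Splitting an average over `ℤ/p^N` into units and multiples of `p`. -/
theorem expect_split (hN : 0 < N) (f : ZMod (p ^ N) → ℝ) :
    𝔼 x, f x = 𝔼 x, (if IsUnit x then f x else 0) + (p : ℝ)⁻¹ * 𝔼 x, f (p * x) := by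
  have h := expect_eq_add_expect_comp (AddMonoidHom.mulLeft (p : ZMod (p ^ N))) IsUnit
    (fun x => by
      rw [not_isUnit_iff_dvd hN]
      exact ⟨fun ⟨y, hy⟩ => ⟨y, hy.symm⟩, fun ⟨y, hy⟩ => ⟨y, hy.symm⟩⟩) f
  rw [card_mul_eq_zero hN] at h
  exact h

open scoped Classical in
/-- Splitting an average over vectors over `ℤ/p^N` into those with a unit entry and multiples
of `p`. -/
theorem expect_split_pi {ι : Type*} [Fintype ι] [DecidableEq ι] (hN : 0 < N)
    (f : (ι → ZMod (p ^ N)) → ℝ) :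
    𝔼 w, f w = 𝔼 w, (if ∃ i, IsUnit (w i) then f w else 0) +
      (p : ℝ)⁻¹ ^ Fintype.card ι * 𝔼 w : ι → ZMod (p ^ N), f (fun i => p * w i) := by
  let φ : (ι → ZMod (p ^ N)) →+ (ι → ZMod (p ^ N)) :=
    AddMonoidHom.mulLeft (fun _ => (p : ZMod (p ^ N)))
  have h := expect_eq_add_expect_comp φ (fun w => ∃ i, IsUnit (w i))
    (fun x => by
      rw [not_exists]
      simp_rw [not_isUnit_iff_dvd hN]
      constructor
      · intro hx
        choose y hy using hx
        exact ⟨y, funext fun i => (hy i).symm⟩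
      · rintro ⟨y, rfl⟩ i
        exact ⟨y i, rfl⟩) f
  have hker : Nat.card φ.ker = p ^ Fintype.card ι := by
    have hequiv : φ.ker ≃ (ι → (AddMonoidHom.mulLeft (p : ZMod (p ^ N))).ker) :=
      ⟨fun w i => ⟨w.1 i, congr_fun w.2 i⟩, fun w => ⟨fun i => (w i).1, funext fun i => (w i).2⟩,
        fun _ => rfl, fun _ => rfl⟩
    rw [Nat.card_congr hequiv, Nat.card_fun, card_mul_eq_zero hN, Nat.card_eq_fintype_card]
  rw [hker] at h
  push_cast at h
  rw [inv_pow]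
  exact h

open scoped Classical in
theorem expect_isUnit (hN : 0 < N) (c : ℝ) :
    𝔼 x : ZMod (p ^ N), (if IsUnit x then c else 0) = (1 - (p : ℝ)⁻¹) * c := by
  have h := expect_split (p := p) hN fun _ => c
  rw [Fintype.expect_const] at h
  linarith

open scoped Classical in
theorem expect_exists_isUnit {ι : Type*} [Fintype ι] [DecidableEq ι] (hN : 0 < N) (c : ℝ) :
    𝔼 w : ι → ZMod (p ^ N), (if ∃ i, IsUnit (w i) then c else 0) =
      (1 - (p : ℝ)⁻¹ ^ Fintype.card ι) * c := by
  have h := expect_split_pi (p := p) (ι := ι) hN fun _ => c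
  rw [Fintype.expect_const] at h
  linarith

theorem notDvd_isUnit_mul (μ : ℕ) (u x : ZMod (p ^ N)) (hu : IsUnit u) :
    notDvd p N μ (u * x) = notDvd p N μ x := by
  simp [notDvd, hu.dvd_mul_left]

theorem notDvd_mul {μ : ℕ} (hμ : μ ≤ N) (x : ZMod (p ^ N)) :
    notDvd p N μ (p * x) = notDvd p N (μ - 1) x := by
  cases μ with
  | zero => simp [notDvd_zero]
  | succ μ => simp only [notDvd, pow_dvd_mul_iff hμ, Nat.add_sub_cancel]

theorem det_border_mul {R ι : Type*} [CommRing R] [Fintype ι] [DecidableEq ι] (r a : R)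
    (w v : ι → R) (B : Matrix ι ι R) :
    (fromBlocks (of fun (_ _ : Unit) => r * a) (of fun _ j => r * w j) (of fun i _ => v i) B).det =
      r * (fromBlocks (of fun (_ _ : Unit) => a) (of fun _ j => w j) (of fun i _ => v i)
        B).det := by
  have h : fromBlocks (of fun (_ _ : Unit) => r * a) (of fun _ j => r * w j) (of fun i _ => v i) B =
      fromBlocks (of fun (_ _ : Unit) => r) 0 0 1 *
        fromBlocks (of fun (_ _ : Unit) => a) (of fun _ j => w j) (of fun i _ => v i) B := by
    rw [fromBlocks_multiply]
    congr 1 <;> ext <;> simp [Matrix.mul_apply]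
  rw [h, det_mul, det_fromBlocks_zero₂₁]
  simp

theorem det_border_transpose {R ι : Type*} [CommRing R] [Fintype ι] [DecidableEq ι] (a : R)
    (w v : ι → R) {B : Matrix ι ι R} (hB : B.IsSymm) :
    (fromBlocks (of fun (_ _ : Unit) => a) (of fun _ j => w j) (of fun i _ => v i) B).det =
      (fromBlocks (of fun (_ _ : Unit) => a) (of fun _ j => v j) (of fun i _ => w i) B).det := by
  rw [← det_transpose, fromBlocks_transpose, hB.eq]
  rfl

theorem symAvg_recurrence (hN : 0 < N) (n : ℕ) {μ : ℕ} (hμ : μ ≤ N) :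
    symAvg (Fin (n + 1)) (notDvd p N μ) =
      (1 - (p : ℝ)⁻¹) * symAvg (Fin n) (notDvd p N μ) +
      (p : ℝ)⁻¹ * (1 - (p : ℝ)⁻¹ ^ n) * symAvg (Fin (n - 1)) (notDvd p N μ) +
      (p : ℝ)⁻¹ ^ (n + 1) * (1 - (p : ℝ)⁻¹) * symAvg (Fin n) (notDvd p N (μ - 1)) +
      (p : ℝ)⁻¹ ^ (n + 2) * symAvg (Fin (n + 1)) (notDvd p N (μ - 2)) := by
  classical
  have := isLocalRing_zmod_prime_pow (p := p) hN
  have e : Fin (n + 1) ≃ Unit ⊕ Fin n := Fintype.equivOfCardEq (by simp [add_comm])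
  have hp_nonunit (a : ZMod (p ^ N)) : ¬ IsUnit ((p : ZMod (p ^ N)) * a) :=
    (not_isUnit_iff_dvd hN _).2 (dvd_mul_right _ _)
  let F (ν : ℕ) (a : ZMod (p ^ N)) (w v : Fin n → ZMod (p ^ N)) : ℝ :=
    𝔼 B : symMat (Fin n) (ZMod (p ^ N)), notDvd p N ν
      (fromBlocks (of fun (_ _ : Unit) => a) (of fun _ j => w j) (of fun i _ => v i) B.1).det
  have F_total (ν : ℕ) : symAvg (Fin (n + 1)) (notDvd p N ν) = 𝔼 a, 𝔼 w, F ν a w w := by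
    rw [symAvg_congr e, symAvg_border]
  have F_unit (ν : ℕ) (a r) (w : Fin n → ZMod (p ^ N)) (ha : IsUnit a) :
      F ν a w (fun i => r * w i) = symAvg (Fin n) (notDvd p N ν) := by
    refine expect_det_fromBlocks (notDvd_isUnit_mul ν) _ (by simpa using ha) _ _ ?_
    have hr : (of fun (i : Fin n) (_ : Unit) => r * w i) =
        r • (of fun (_ : Unit) (j : Fin n) => w j)ᵀ := rfl
    rw [hr, Matrix.smul_mul, Matrix.smul_mul]
    exact (isSymm_conj_inv (K := of fun (_ _ : Unit) => a) rfl _).smul r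
  have F_pivot (a) (w : Fin n → ZMod (p ^ N)) (hw : ∃ i, IsUnit (w i)) :
      F μ (p * a) w w = symAvg (Fin (n - 1)) (notDvd p N μ) := by
    obtain ⟨j, hj⟩ := hw
    refine (expect_det_border_of_isUnit (notDvd_isUnit_mul μ) (hp_nonunit a) hj).trans ?_
    exact symAvg_congr (Fintype.equivOfCardEq (by simp [Fintype.card_subtype_compl])) _
  have F_mul (a) (w v : Fin n → ZMod (p ^ N)) {ν} (hν : ν ≤ N) :
      F ν (p * a) (fun i => p * w i) v = F (ν - 1) a w v := by
    refine expect_congr rfl fun B _ => ?_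
    rw [det_border_mul, notDvd_mul hν]
  have F_symm (ν a) (w v : Fin n → ZMod (p ^ N)) : F ν a w v = F ν a v w :=
    expect_congr rfl fun B _ => by rw [det_border_transpose _ _ _ B.2]
  have F_sq (a) (w : Fin n → ZMod (p ^ N)) :
      F (μ - 1) (p * a) w (fun i => p * w i) = F (μ - 2) a w w := by
    rw [F_symm, F_mul _ _ _ (by omega)]
    rfl
  clear_value F
  have h1 : 𝔼 a, (if IsUnit a then 𝔼 w, F μ a w w else 0) =
      (1 - (p : ℝ)⁻¹) * symAvg (Fin n) (notDvd p N μ) := by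
    rw [← expect_isUnit hN]
    refine expect_congr rfl fun a _ => ?_
    split_ifs with ha
    · rw [← Fintype.expect_const (ι := Fin n → ZMod (p ^ N)) (symAvg _ _)]
      exact expect_congr rfl fun w _ => by simpa using F_unit μ a 1 w ha
    · rfl
  have h2 (a) : 𝔼 w, F μ (p * a) w w =
      (1 - (p : ℝ)⁻¹ ^ n) * symAvg (Fin (n - 1)) (notDvd p N μ) +
      (p : ℝ)⁻¹ ^ n * 𝔼 w : Fin n → ZMod (p ^ N), F (μ - 1) a w (fun i => p * w i) := by
    refine (expect_split_pi hN _).trans ?_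
    rw [Fintype.card_fin]
    refine congrArg₂ _ ?_ (congrArg _ ?_)
    · have := expect_exists_isUnit (p := p) (ι := Fin n) hN (symAvg (Fin (n - 1)) (notDvd p N μ))
      rw [Fintype.card_fin] at this
      rw [← this]
      refine expect_congr rfl fun w _ => ?_
      split_ifs with hw
      · exact F_pivot a w hw
      · rfl
    · exact expect_congr rfl fun w _ => F_mul a w _ hμ
  have h3 : 𝔼 a, 𝔼 w : Fin n → ZMod (p ^ N), F (μ - 1) a w (fun i => p * w i) =
      (1 - (p : ℝ)⁻¹) * symAvg (Fin n) (notDvd p N (μ - 1)) +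
      (p : ℝ)⁻¹ * symAvg (Fin (n + 1)) (notDvd p N (μ - 2)) := by
    refine (expect_split hN _).trans (congrArg₂ _ ?_ (congrArg _ ?_))
    · rw [← expect_isUnit hN]
      refine expect_congr rfl fun a _ => ?_
      split_ifs with ha
      · rw [← Fintype.expect_const (ι := Fin n → ZMod (p ^ N)) (symAvg _ _)]
        exact expect_congr rfl fun w _ => F_unit (μ - 1) a p w ha
      · rfl
    · rw [F_total]
      exact expect_congr rfl fun a _ => expect_congr rfl fun w _ => F_sq a w
  rw [F_total, expect_split hN (fun a => 𝔼 w, F μ a w w), h1,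
    expect_congr rfl fun a _ => h2 a, expect_add_distrib, Fintype.expect_const, ← mul_expect, h3]
  ring

theorem symAvg_fin_zero {μ : ℕ} (hμ : 0 < μ) (hN : 0 < N) :
    symAvg (Fin 0) (notDvd p N μ) = 1 := by
  have h1 : ¬ (p : ZMod (p ^ N)) ^ μ ∣ 1 := fun h =>
    (not_isUnit_iff_dvd hN (1 : ZMod (p ^ N))).2 ((dvd_pow_self _ hμ.ne').trans h) isUnit_one
  simp [symAvg, notDvd, h1]

theorem symAvg_notDvd_zero (n : ℕ) : symAvg (Fin n) (notDvd p N 0) = 0 := by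
  simp [symAvg, notDvd_zero]

theorem card_symMat (R : Type*) [CommRing R] [Finite R] (n : ℕ) :
    Nat.card (symMat (Fin n) R) = Nat.card R ^ (n * (n + 1) / 2) := by
  have key : ∀ n, Nat.card (symMat (Fin n) R) = Nat.card R ^ (∑ i ∈ range (n + 1), i) := by
    intro n
    induction n with
    | zero =>
      have : Subsingleton (symMat (Fin 0) R) := ⟨fun A B => Subtype.ext (Subsingleton.elim _ _)⟩
      simp [-Nat.card_eq_fintype_card]
    | succ n ih =>
      let e : Fin (n + 1) ≃ Unit ⊕ Fin n := Fintype.equivOfCardEq (by simp [add_comm])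
      rw [Nat.card_congr ((symMatReindex e R).trans (symMatBorder (Fin n) R).symm), Nat.card_prod,
        Nat.card_prod, ih, Nat.card_fun, Nat.card_fin, sum_range_succ _ (n + 1)]
      ring
  rw [key, Finset.sum_range_id, Nat.add_sub_cancel, mul_comm]

theorem Psym_eq_symAvg (n : ℕ) :
    Psym n (p ^ N) = symAvg (Fin n) (notDvd p N N) := by
  classical
  rw [Psym, symAvg, Fintype.expect_eq_sum_div_card, ← Nat.card_eq_fintype_card, card_symMat,
    Nat.card_zmod]
  push_cast
  congr 1
  have hind (x : ZMod (p ^ N)) : notDvd p N N x = if x ≠ 0 then 1 else 0 := by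
    have : (p : ZMod (p ^ N)) ^ N = 0 := by rw [← Nat.cast_pow, ZMod.natCast_self]
    simp [notDvd, this]
  simp_rw [hind]
  rw [sum_boole, Nsym, ← Fintype.card_subtype, ← Nat.card_eq_fintype_card]
  exact congrArg _ (Nat.card_congr (Equiv.subtypeSubtypeEquivSubtypeInter _ _).symm)

end PrimePower

section ClosedForm

open PowerSeries

/-- The Gaussian binomial coefficient `[k + j - 1, j]` with parameter `q ^ 2`. -/
noncomputable def gaussCoeff (q : ℝ) (k j : ℕ) : ℝ :=
  if k = 0 then (if j = 0 then 1 else 0)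
  else PiProd (k + j - 1) (q ^ 2) / (PiProd j (q ^ 2) * PiProd (k - 1) (q ^ 2))

/-- The product `∏_{i < k} (1 - q ^ (2 * i + 1))`. -/
noncomputable def oddProd (q : ℝ) (k : ℕ) : ℝ := ∏ i ∈ range k, (1 - q ^ (2 * i + 1))

/-- The power series `∏_{i = 1}^k (1 - q ^ (2 * i + 1) * X ^ 2)⁻¹`, given by its coefficients. -/
noncomputable def evenSeries (q : ℝ) (k : ℕ) : ℝ⟦X⟧ :=
  PowerSeries.mk fun m => if Even m then q ^ (3 * (m / 2)) * gaussCoeff q k (m / 2) else 0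

/-- The power series `X / ((1 - X) * (1 - q * X))`, given by its coefficients. -/
noncomputable def baseSeries (q : ℝ) : ℝ⟦X⟧ := PowerSeries.mk fun m => (1 - q ^ m) / (1 - q)

/-- The generating function in `μ` of the proportion of symmetric `n × n` matrices over `ℤ/p^μ`
with nonzero determinant, where `q = 1 / p`. -/
noncomputable def symSeries (q : ℝ) (n : ℕ) : ℝ⟦X⟧ :=
  if Even n then
    C (oddProd q (n / 2)) * (((1 - C (q ^ (n + 1)) * X) * baseSeries q) * evenSeries q (n / 2))
  else C (oddProd q (n / 2 + 1)) * (baseSeries q * evenSeries q (n / 2))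

variable {q : ℝ}

theorem PiProd_succ (n : ℕ) (t : ℝ) : PiProd (n + 1) t = PiProd n t * (1 - t ^ (n + 1)) :=
  prod_range_succ _ _

theorem PiProd_zero (t : ℝ) : PiProd 0 t = 1 := prod_range_zero _

theorem PiProd_pos {t : ℝ} (h0 : 0 ≤ t) (h1 : t < 1) (n : ℕ) : 0 < PiProd n t :=
  prod_pos fun _ _ => sub_pos.2 (pow_lt_one₀ h0 h1 (Nat.succ_ne_zero _))

theorem oddProd_succ (q : ℝ) (k : ℕ) :
    oddProd q (k + 1) = oddProd q k * (1 - q ^ (2 * k + 1)) := prod_range_succ _ _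

theorem PiProd_two_mul (q : ℝ) (k : ℕ) : PiProd (2 * k) q = oddProd q k * PiProd k (q ^ 2) := by
  induction k with
  | zero => simp [PiProd, oddProd]
  | succ k ih =>
    rw [Nat.mul_succ, PiProd_succ, PiProd_succ, ih, oddProd_succ, PiProd_succ]
    ring

theorem gaussCoeff_zero_right (h0 : 0 ≤ q) (h1 : q < 1) (k : ℕ) : gaussCoeff q k 0 = 1 := by
  rcases eq_or_ne k 0 with rfl | hk
  · simp [gaussCoeff]
  · rw [gaussCoeff, if_neg hk, add_zero, PiProd_zero, one_mul,
      div_self (PiProd_pos (by positivity) (by nlinarith) _).ne']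

theorem gaussCoeff_succ_succ (h0 : 0 ≤ q) (h1 : q < 1) (k j : ℕ) :
    gaussCoeff q (k + 1) (j + 1) =
      q ^ (2 * k) * gaussCoeff q (k + 1) j + gaussCoeff q k (j + 1) := by
  have hpos (n : ℕ) : PiProd n (q ^ 2) ≠ 0 := (PiProd_pos (by positivity) (by nlinarith) n).ne'
  cases k with
  | zero => simp [gaussCoeff, PiProd_zero, hpos, add_comm 1]
  | succ k =>
    have h := hpos (j + 1)
    have h' := hpos (k + 1)
    have e1 : k + 1 + 1 + (j + 1) - 1 = k + j + 1 + 1 := by omega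
    have e2 : k + 1 + 1 + j - 1 = k + j + 1 := by omega
    have e3 : k + 1 + (j + 1) - 1 = k + j + 1 := by omega
    simp only [gaussCoeff, Nat.add_eq_zero_iff, one_ne_zero, and_false, if_false, e1, e2, e3,
      Nat.add_sub_cancel]
    rw [PiProd_succ] at h h'
    rw [PiProd_succ (k + j + 1), PiProd_succ j, PiProd_succ k]
    have := left_ne_zero_of_mul h
    have := right_ne_zero_of_mul h
    have := left_ne_zero_of_mul h'
    have := right_ne_zero_of_mul h'
    field_simp
    ring

theorem evenSeries_zero (q : ℝ) : evenSeries q 0 = 1 := by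
  ext m
  rw [evenSeries, coeff_mk, coeff_one]
  rcases Nat.even_or_odd' m with ⟨j, rfl | rfl⟩
  · by_cases hj : j = 0 <;> simp [gaussCoeff, hj]
  · simp

theorem evenSeries_eq (h0 : 0 ≤ q) (h1 : q < 1) (k : ℕ) :
    evenSeries q k = (1 - C (q ^ (2 * k + 3)) * X ^ 2) * evenSeries q (k + 1) := by
  ext m
  rw [sub_mul, one_mul, mul_assoc, map_sub, coeff_C_mul, coeff_X_pow_mul']
  simp only [evenSeries, coeff_mk]
  rcases Nat.even_or_odd' m with ⟨j, rfl | rfl⟩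
  · cases j with
    | zero => simp [gaussCoeff_zero_right h0 h1]
    | succ j =>
      have e : 2 * (j + 1) - 2 = 2 * j := by omega
      rw [e, if_pos (show 2 ≤ 2 * (j + 1) by omega)]
      simp [gaussCoeff_succ_succ h0 h1]
      ring
  · cases j with
    | zero => simp
    | succ j =>
      have e : 2 * (j + 1) + 1 - 2 = 2 * j + 1 := by omega
      rw [e]
      simp

theorem symSeries_two_mul (q : ℝ) (k : ℕ) : symSeries q (2 * k) = C (oddProd q k) *
    (((1 - C (q ^ (2 * k + 1)) * X) * baseSeries q) * evenSeries q k) := by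
  simp [symSeries]

theorem symSeries_two_mul_add_one (q : ℝ) (k : ℕ) : symSeries q (2 * k + 1) =
    C (oddProd q (k + 1)) * (baseSeries q * evenSeries q k) := by
  have e : (2 * k + 1) / 2 = k := by omega
  simp [symSeries, e]

theorem symSeries_recurrence (h0 : 0 ≤ q) (h1 : q < 1) (n : ℕ) :
    symSeries q (n + 1) = C (1 - q) * symSeries q n +
      C (q * (1 - q ^ n)) * symSeries q (n - 1) +
      C (q ^ (n + 1) * (1 - q)) * (X ^ 1 * symSeries q n) +
      C (q ^ (n + 2)) * (X ^ 2 * symSeries q (n + 1)) := by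
  rcases Nat.even_or_odd' n with ⟨k, rfl | rfl⟩
  · rw [symSeries_two_mul_add_one, symSeries_two_mul, oddProd_succ]
    cases k with
    | zero =>
      simp only [map_mul, map_sub, map_pow, map_one]
      ring
    | succ k =>
      have e : 2 * (k + 1) - 1 = 2 * k + 1 := by omega
      rw [e, symSeries_two_mul_add_one, evenSeries_eq h0 h1 k]
      simp only [map_mul, map_sub, map_pow, map_one]
      ring
  · have e : 2 * k + 1 + 1 = 2 * (k + 1) := by ring
    rw [Nat.add_sub_cancel, e, symSeries_two_mul_add_one, symSeries_two_mul, symSeries_two_mul,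
      oddProd_succ, evenSeries_eq h0 h1 k]
    simp only [map_mul, map_sub, map_pow, map_one]
    ring

theorem coeff_zero_symSeries (q : ℝ) (n : ℕ) : coeff 0 (symSeries q n) = 0 := by
  have h : constantCoeff (baseSeries q) = 0 := by
    simp [baseSeries, ← coeff_zero_eq_constantCoeff_apply]
  rw [coeff_zero_eq_constantCoeff_apply, symSeries]
  split_ifs <;> simp [h]

theorem coeff_X_pow_mul_of_coeff_zero {f : ℝ⟦X⟧} (hf : coeff 0 f = 0) (d m : ℕ) :
    coeff m (X ^ d * f) = coeff (m - d) f := by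
  rw [coeff_X_pow_mul']
  split_ifs with h
  · rfl
  · rw [Nat.sub_eq_zero_of_le (not_le.1 h).le, hf]

theorem coeff_symSeries_recurrence (h0 : 0 ≤ q) (h1 : q < 1) (n μ : ℕ) :
    coeff μ (symSeries q (n + 1)) = (1 - q) * coeff μ (symSeries q n) +
      q * (1 - q ^ n) * coeff μ (symSeries q (n - 1)) +
      q ^ (n + 1) * (1 - q) * coeff (μ - 1) (symSeries q n) +
      q ^ (n + 2) * coeff (μ - 2) (symSeries q (n + 1)) := by
  conv_lhs => rw [symSeries_recurrence h0 h1]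
  simp only [map_add, coeff_C_mul, coeff_X_pow_mul_of_coeff_zero (coeff_zero_symSeries q _)]

theorem coeff_symSeries_zero (h1 : q < 1) {μ : ℕ} (hμ : 0 < μ) : coeff μ (symSeries q 0) = 1 := by
  have h : 1 - q ≠ 0 := (sub_pos.2 h1).ne'
  obtain ⟨m, rfl⟩ := Nat.exists_eq_succ_of_ne_zero hμ.ne'
  have h2 := symSeries_two_mul q 0
  simp only [mul_zero, evenSeries_zero] at h2
  rw [h2, mul_one, sub_mul, one_mul, mul_assoc, coeff_C_mul, map_sub, coeff_C_mul,
    Nat.succ_eq_add_one, coeff_succ_X_mul]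
  simp only [baseSeries, coeff_mk, oddProd, prod_range_zero]
  field_simp
  ring

theorem symAvg_eq_coeff {p N : ℕ} [Fact p.Prime] (hN : 0 < N) (n : ℕ) {μ : ℕ} (hμ : μ ≤ N) :
    symAvg (Fin n) (notDvd p N μ) = coeff μ (symSeries (p : ℝ)⁻¹ n) := by
  have hp : p.Prime := Fact.out
  have h0 : 0 ≤ (p : ℝ)⁻¹ := by positivity
  have h1 : (p : ℝ)⁻¹ < 1 := inv_lt_one_of_one_lt₀ (by exact_mod_cast hp.one_lt)
  induction n using Nat.strong_induction_on generalizing μ with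
  | _ n ihn =>
    induction μ using Nat.strong_induction_on with
    | _ μ ihμ =>
      rcases Nat.eq_zero_or_pos μ with rfl | hpos
      · rw [symAvg_notDvd_zero, coeff_zero_symSeries]
      cases n with
      | zero => rw [symAvg_fin_zero hpos hN, coeff_symSeries_zero h1 hpos]
      | succ n =>
        rw [symAvg_recurrence hN n hμ, coeff_symSeries_recurrence h0 h1,
          ihn n (by omega) hμ, ihn (n - 1) (by omega) hμ, ihn n (by omega) (by omega),
          ihμ (μ - 2) (by omega) (by omega)]

theorem T_eq_sum (q : ℝ) (β k s : ℕ) :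
    T q β k s = ∑ j ∈ range (s + 1), q ^ (β * j) * gaussCoeff q k j := by
  unfold T gaussCoeff
  split_ifs with h
  · simp
  · exact sum_congr rfl fun j _ => mul_div_assoc _ _ _

theorem coeff_mul_evenSeries {f : ℝ⟦X⟧} (hf : coeff 0 f = 0) {μ : ℕ} (hμ : 0 < μ) (k : ℕ) :
    coeff μ (f * evenSeries q k) = ∑ j ∈ range ((μ - 1) / 2 + 1),
      q ^ (3 * j) * gaussCoeff q k j * coeff (μ - 2 * j) f := by
  rw [mul_comm, coeff_mul, Finset.Nat.sum_antidiagonal_eq_sum_range_succ_mk]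
  symm
  refine sum_of_injOn (fun j => 2 * j) (fun i _ j _ h => by simpa using h) ?_ ?_ ?_
  · intro j hj
    simp only [coe_range, Set.mem_Iio] at *
    omega
  · intro i hi hi'
    simp only [coe_range, Set.mem_image, Set.mem_Iio, not_exists, not_and, mem_range] at hi hi'
    rcases Nat.even_or_odd' i with ⟨j, rfl | rfl⟩
    · have : μ - 2 * j = 0 := by
        by_contra h
        exact hi' j (by omega) rfl
      simp [this, hf]
    · simp [evenSeries]
  · intro j _
    simp [evenSeries]

theorem coeff_mul_evenSeries_eq_T {f : ℝ⟦X⟧} {α β : ℝ} (hf : coeff 0 f = 0)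
    (hf' : ∀ m, 0 < m → coeff m f = (α - q ^ m * β) / (1 - q)) {μ : ℕ} (hμ : 0 < μ) (k : ℕ) :
    coeff μ (f * evenSeries q k) =
      (α * T q 3 k ((μ - 1) / 2) - q ^ μ * β * T q 1 k ((μ - 1) / 2)) / (1 - q) := by
  rw [coeff_mul_evenSeries hf hμ, T_eq_sum, T_eq_sum, mul_sum, mul_sum, ← sum_sub_distrib, sum_div]
  refine sum_congr rfl fun j hj => ?_
  have hj' : 2 * j < μ := by
    have := mem_range.1 hj
    omega
  obtain ⟨m, rfl⟩ := Nat.exists_eq_add_of_lt hj'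
  rw [hf' _ (by omega), show 2 * j + m + 1 - 2 * j = m + 1 by omega]
  ring

theorem coeff_symSeries (h1 : q < 1) {μ : ℕ} (hμ : 0 < μ) (n : ℕ) :
    coeff μ (symSeries q n) = oddProd q (n / 2) / (1 - q) *
      ((1 - q ^ (2 * (n / 2) + 1)) * T q 3 (n / 2) ((μ - 1) / 2) -
        q ^ μ * (1 - q ^ n) * T q 1 (n / 2) ((μ - 1) / 2)) := by
  have h : 1 - q ≠ 0 := (sub_pos.2 h1).ne'
  rcases Nat.even_or_odd' n with ⟨k, rfl | rfl⟩
  · rw [symSeries_two_mul, coeff_C_mul, coeff_mul_evenSeries_eq_T (α := 1 - q ^ (2 * k + 1))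
      (β := 1 - q ^ (2 * k)) _ _ hμ, Nat.mul_div_cancel_left _ two_pos]
    · ring
    · simp [baseSeries]
    · intro m hm
      obtain ⟨m, rfl⟩ := Nat.exists_eq_succ_of_ne_zero hm.ne'
      rw [sub_mul, one_mul, mul_assoc, map_sub, coeff_C_mul, Nat.succ_eq_add_one,
        coeff_succ_X_mul]
      simp only [baseSeries, coeff_mk]
      ring
  · have e : (2 * k + 1) / 2 = k := by omega
    rw [symSeries_two_mul_add_one, coeff_C_mul, coeff_mul_evenSeries_eq_T (α := 1)
      (β := 1) _ _ hμ, e, oddProd_succ]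
    · ring
    · simp [baseSeries]
    · intro m _
      simp [baseSeries]

end ClosedForm

theorem Psym_explicit (p : ℕ) (hp : p.Prime) (q : ℝ) (hq : q = 1 / p)
    (n μ : ℕ) (hn : 1 ≤ n) (hμ : 1 ≤ μ) (k s : ℕ) (hk : k = n / 2)
    (hs : s = (μ - 1) / 2) :
    Psym n (p ^ μ) =
      (PiProd (2 * k) q / ((1 - q) * PiProd k (q ^ 2))) *
        ((1 - q ^ (2 * k + 1)) * T q 3 k s - q ^ μ * (1 - q ^ n) * T q 1 k s) := by
  have : Fact p.Prime := ⟨hp⟩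
  have h0 : 0 ≤ q := by rw [hq]; positivity
  have h1 : q < 1 := by
    rw [hq, one_div]
    exact inv_lt_one_of_one_lt₀ (by exact_mod_cast hp.one_lt)
  have hP : PiProd k (q ^ 2) ≠ 0 := (PiProd_pos (by positivity) (by nlinarith) k).ne'
  rw [Psym_eq_symAvg, symAvg_eq_coeff hμ n le_rfl, ← one_div, ← hq, coeff_symSeries h1 hμ,
    ← hk, ← hs, PiProd_two_mul, mul_div_mul_right _ _ hP]
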